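/- arXiv:2304.05175 — 6 statements merged into one kernel-verified Lean document; each statement's English description precedes it below -/
import Mathlib

section
/- Under the KKT setup for a single storage unit at a single time period, if the locational marginal price satisfies λ_p > λ^{p,C1}, then p_ch · p_dc = 0, i.e., the complementarity constraint is satisfied and no simultaneous charging and discharging occurs (Theorem 1, Condition C1). -/
/-!
Charging at rate `1 / η_dc` while discharging at rate `η_ch` leaves the stored energy unchanged, so
weighting the two stationarity equations by these rates eliminates the storage dual `Γ`. What
remains says that the distance of `λ_p` above `λ^{p,C1}` is a nonzero multiple of
`λ_ch1 / η_dc + λ_dc1 * η_ch`. When `λ_p ≠ λ^{p,C1}` one of the two multipliers is therefore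
nonzero, and complementary slackness makes the corresponding power vanish.
-/

section BreakEvenPrice

variable {K : Type*} [Field K] {η_ch η_dc c_ch c_dc γ lam_p μ_ch μ_dc p_ch p_dc : K}

/-- The electricity price at which charging at rate `1 / η_dc` while discharging at rate `η_ch` has
zero marginal cost, where `c_ch` and `c_dc` are the marginal costs of the two powers apart from the
price. At `c_ch = g_ch`, `c_dc = g_dc` it is `λ^{p,C2}`. A lossless unit, `η_ch = 1 / η_dc`, has no
unique such price and gets the junk value `0`. -/
def breakEvenPrice (η_ch η_dc c_ch c_dc : K) : K :=
  (c_ch / η_dc + c_dc * η_ch) / (η_ch - 1 / η_dc)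

theorem breakEvenPrice_add (η_ch η_dc c_ch c_dc e_ch e_dc : K) :
    breakEvenPrice η_ch η_dc (c_ch + e_ch) (c_dc + e_dc) =
      breakEvenPrice η_ch η_dc c_ch c_dc - (e_ch / η_dc + e_dc * η_ch) / (1 / η_dc - η_ch) := by
  rw [breakEvenPrice, breakEvenPrice, ← neg_sub η_ch (1 / η_dc), div_neg, sub_neg_eq_add,
    ← add_div]
  ring

theorem sub_breakEvenPrice_mul (hlossy : η_ch ≠ 1 / η_dc) :
    (lam_p - breakEvenPrice η_ch η_dc c_ch c_dc) * (1 / η_dc - η_ch) =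
      (c_ch + lam_p) / η_dc + (c_dc - lam_p) * η_ch := by
  have hcancel : breakEvenPrice η_ch η_dc c_ch c_dc * (η_ch - 1 / η_dc) =
      c_ch / η_dc + c_dc * η_ch := div_mul_cancel₀ _ (sub_ne_zero.mpr hlossy)
  linear_combination hcancel

theorem sub_breakEvenPrice_mul_of_stationary (hlossy : η_ch ≠ 1 / η_dc)
    (hch : c_ch + lam_p - μ_ch + η_ch * γ = 0) (hdc : c_dc - lam_p - μ_dc - γ / η_dc = 0) :
    (lam_p - breakEvenPrice η_ch η_dc c_ch c_dc) * (1 / η_dc - η_ch) =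
      μ_ch / η_dc + μ_dc * η_ch := by
  rw [sub_breakEvenPrice_mul hlossy]
  linear_combination hch / η_dc + hdc * η_ch

theorem condition_C1_exact_relaxation_general (hη_dc : η_dc ≠ 0) (hη : η_ch * η_dc ≠ 1)
    (hslack_ch : μ_ch * p_ch = 0) (hslack_dc : μ_dc * p_dc = 0)
    (hch : c_ch + lam_p - μ_ch + η_ch * γ = 0) (hdc : c_dc - lam_p - μ_dc - γ / η_dc = 0)
    (hprice : lam_p ≠ breakEvenPrice η_ch η_dc c_ch c_dc) :
    p_ch * p_dc = 0 := by
  have hlossy : η_ch ≠ 1 / η_dc := fun h => hη ((eq_div_iff hη_dc).mp h)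
  by_contra hp
  obtain ⟨hp_ch, hp_dc⟩ := mul_ne_zero_iff.mp hp
  have hμ_ch : μ_ch = 0 := (mul_eq_zero_iff_right hp_ch).mp hslack_ch
  have hμ_dc : μ_dc = 0 := (mul_eq_zero_iff_right hp_dc).mp hslack_dc
  have hgap : (lam_p - breakEvenPrice η_ch η_dc c_ch c_dc) * (1 / η_dc - η_ch) = 0 := by
    rw [sub_breakEvenPrice_mul_of_stationary hlossy hch hdc, hμ_ch, hμ_dc, zero_div, zero_mul,
      add_zero]
  exact mul_ne_zero (sub_ne_zero.mpr hprice) (sub_ne_zero.mpr hlossy.symm) hgap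

end BreakEvenPrice

theorem condition_C1_exact_relaxation
    (η_ch η_dc g_ch g_dc Δt Pch Pdc p_ch p_dc Γ lam_p lam_ch1 lam_ch2 lam_dc1 lam_dc2 lam_S1 lam_S2 lam_relax : ℝ)
    (hηch0 : 0 < η_ch) (hηch1 : η_ch < 1) (hηdc0 : 0 < η_dc) (hηdc1 : η_dc < 1)
    (hΔt : 0 < Δt) (hPch : 0 < Pch) (hPdc : 0 < Pdc)
    (hpch : 0 ≤ p_ch) (hpdc : 0 ≤ p_dc)
    (hch1 : 0 ≤ lam_ch1) (hch2 : 0 ≤ lam_ch2) (hdc1 : 0 ≤ lam_dc1) (hdc2 : 0 ≤ lam_dc2)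
    (hS1 : 0 ≤ lam_S1) (hS2 : 0 ≤ lam_S2) (hrelax : 0 ≤ lam_relax)
    (hcs1 : lam_ch1 * p_ch = 0) (hcs2 : lam_dc1 * p_dc = 0)
    (hstat1 : g_ch + lam_p - lam_ch1 + lam_ch2 + lam_relax / Pch + 2 * lam_S2 * p_ch + η_ch * Γ * Δt = 0)
    (hstat2 : g_dc - lam_p - lam_dc1 + lam_dc2 + lam_relax / Pdc + 2 * lam_S1 * p_dc - Γ * Δt / η_dc = 0)
    (hC1 : lam_p > (g_ch / η_dc + g_dc * η_ch) / (η_ch - 1 / η_dc) -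
      ((lam_ch2 + 2 * lam_S2 * p_ch + lam_relax / Pch) / η_dc +
       (lam_dc2 + 2 * lam_S1 * p_dc + lam_relax / Pdc) * η_ch) / (1 / η_dc - η_ch)) :
    p_ch * p_dc = 0 := by
  refine condition_C1_exact_relaxation_general (γ := Γ * Δt) hηdc0.ne'
    (mul_lt_one_of_nonneg_of_lt_one_left hηch0.le hηch1 hηdc1.le).ne hcs1 hcs2
    (by linear_combination hstat1) (by linear_combination hstat2)
    ((breakEvenPrice_add η_ch η_dc g_ch g_dc _ _).trans_lt hC1).ne'
end

section
/- Under the KKT setup for a single storage unit at a single time period, if the locational marginal price satisfies λ_p > λ^{p,C2}, then p_ch · p_dc = 0, i.e., the complementarity constraint is satisfied and no simultaneous charging and discharging occurs (Theorem 1, Condition C2). -/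
/-!
Raising `(p_ch, p_dc)` in the direction `(1 / η_dc, η_ch)` leaves the stored energy unchanged, so
pairing the two stationarity equations with this direction eliminates the state-of-charge
multiplier `Γ`. The price threshold is the value of `λ_p` at which the net marginal cost in this
direction vanishes; above it, the multipliers of `0 ≤ p_ch` and `0 ≤ p_dc` have a positive weighted
sum, so they are not both zero and complementary slackness makes one of the two powers vanish.
-/

section CycleDeriv

variable {K : Type*} [Field K]
  {η_ch η_dc g_ch g_dc c_ch c_dc r_ch r_dc m_ch m_dc p_ch p_dc ν lam : K}

/-- The derivative along the energy-neutral direction `(1 / η_dc, η_ch)` of a function of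
`(p_ch, p_dc)` with partial derivatives `c_ch` and `c_dc`. -/
def cycleDeriv (η_ch η_dc c_ch c_dc : K) : K :=
  c_ch / η_dc + η_ch * c_dc

/-- The price threshold `λ^{p,C2}`, for an objective with partial derivatives `g_ch` and `g_dc`.
The denominator is negative when `0 < η_dc` and `η_ch * η_dc < 1`. -/
def priceThreshold (η_ch η_dc g_ch g_dc : K) : K :=
  (g_ch / η_dc + g_dc * η_ch) / (η_ch - 1 / η_dc)

theorem cycleDeriv_eq_add_of_stationary (h_ch : c_ch - m_ch + r_ch + η_ch * ν = 0)
    (h_dc : c_dc - m_dc + r_dc - ν / η_dc = 0) :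
    cycleDeriv η_ch η_dc m_ch m_dc =
      cycleDeriv η_ch η_dc c_ch c_dc + cycleDeriv η_ch η_dc r_ch r_dc := by
  unfold cycleDeriv
  linear_combination -h_ch / η_dc - η_ch * h_dc

theorem mul_eq_zero_of_cycleDeriv_ne_zero (h_ch : m_ch * p_ch = 0) (h_dc : m_dc * p_dc = 0)
    (hm : cycleDeriv η_ch η_dc m_ch m_dc ≠ 0) : p_ch * p_dc = 0 := by
  have h : cycleDeriv η_ch η_dc m_ch m_dc * (p_ch * p_dc) = 0 := by
    unfold cycleDeriv
    linear_combination p_dc / η_dc * h_ch + η_ch * p_ch * h_dc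
  exact (mul_eq_zero.mp h).resolve_left hm

variable [LinearOrder K] [IsStrictOrderedRing K]

theorem cycleDeriv_nonneg (hη_ch : 0 ≤ η_ch) (hη_dc : 0 ≤ η_dc) (hc_ch : 0 ≤ c_ch)
    (hc_dc : 0 ≤ c_dc) : 0 ≤ cycleDeriv η_ch η_dc c_ch c_dc :=
  add_nonneg (div_nonneg hc_ch hη_dc) (mul_nonneg hη_ch hc_dc)

theorem priceThreshold_lt_iff (hη_dc : 0 < η_dc) (hη : η_ch * η_dc < 1) :
    priceThreshold η_ch η_dc g_ch g_dc < lam ↔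
      0 < cycleDeriv η_ch η_dc (g_ch + lam) (g_dc - lam) := by
  have hneg : η_ch - 1 / η_dc < 0 := sub_neg.mpr ((lt_div_iff₀ hη_dc).mpr hη)
  have hcycle : cycleDeriv η_ch η_dc (g_ch + lam) (g_dc - lam) =
      (g_ch / η_dc + g_dc * η_ch) - lam * (η_ch - 1 / η_dc) := by
    unfold cycleDeriv
    ring
  rw [priceThreshold, div_lt_iff_of_neg hneg, hcycle, sub_pos]

/-- Here `ν` stands for `Γ * Δt`, while `r_ch` and `r_dc` collect the remaining multiplier terms of
the stationarity equations. -/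
theorem condition_C2_exact_relaxation_general
    (hη_ch : 0 ≤ η_ch) (hη_dc : 0 < η_dc) (hη : η_ch * η_dc < 1)
    (hr_ch : 0 ≤ r_ch) (hr_dc : 0 ≤ r_dc)
    (hslack_ch : m_ch * p_ch = 0) (hslack_dc : m_dc * p_dc = 0)
    (hstat_ch : g_ch + lam - m_ch + r_ch + η_ch * ν = 0)
    (hstat_dc : g_dc - lam - m_dc + r_dc - ν / η_dc = 0)
    (hlam : priceThreshold η_ch η_dc g_ch g_dc < lam) :
    p_ch * p_dc = 0 := by
  have hm : 0 < cycleDeriv η_ch η_dc m_ch m_dc := by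
    rw [cycleDeriv_eq_add_of_stationary hstat_ch hstat_dc]
    exact add_pos_of_pos_of_nonneg ((priceThreshold_lt_iff hη_dc hη).mp hlam)
      (cycleDeriv_nonneg hη_ch hη_dc.le hr_ch hr_dc)
  exact mul_eq_zero_of_cycleDeriv_ne_zero hslack_ch hslack_dc hm.ne'

end CycleDeriv

theorem condition_C2_exact_relaxation
    (η_ch η_dc g_ch g_dc Δt Pch Pdc p_ch p_dc Γ lam_p lam_ch1 lam_ch2 lam_dc1 lam_dc2 lam_S1 lam_S2 lam_relax : ℝ)
    (hηch0 : 0 < η_ch) (hηch1 : η_ch < 1) (hηdc0 : 0 < η_dc) (hηdc1 : η_dc < 1)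
    (hΔt : 0 < Δt) (hPch : 0 < Pch) (hPdc : 0 < Pdc)
    (hpch : 0 ≤ p_ch) (hpdc : 0 ≤ p_dc)
    (hch1 : 0 ≤ lam_ch1) (hch2 : 0 ≤ lam_ch2) (hdc1 : 0 ≤ lam_dc1) (hdc2 : 0 ≤ lam_dc2)
    (hS1 : 0 ≤ lam_S1) (hS2 : 0 ≤ lam_S2) (hrelax : 0 ≤ lam_relax)
    (hcs1 : lam_ch1 * p_ch = 0) (hcs2 : lam_dc1 * p_dc = 0)
    (hstat1 : g_ch + lam_p - lam_ch1 + lam_ch2 + lam_relax / Pch + 2 * lam_S2 * p_ch + η_ch * Γ * Δt = 0)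
    (hstat2 : g_dc - lam_p - lam_dc1 + lam_dc2 + lam_relax / Pdc + 2 * lam_S1 * p_dc - Γ * Δt / η_dc = 0)
    (hC2 : lam_p > (g_ch / η_dc + g_dc * η_ch) / (η_ch - 1 / η_dc)) :
    p_ch * p_dc = 0 :=
  condition_C2_exact_relaxation_general (ν := Γ * Δt)
    (r_ch := lam_ch2 + lam_relax / Pch + 2 * lam_S2 * p_ch)
    (r_dc := lam_dc2 + lam_relax / Pdc + 2 * lam_S1 * p_dc)
    hηch0.le hηdc0 (mul_lt_one_of_nonneg_of_lt_one_left hηch0.le hηch1 hηdc1.le)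
    (by positivity) (by positivity) hcs1 hcs2
    (by linear_combination hstat1) (by linear_combination hstat2) hC2
end

section
/- Under the KKT setup for a single storage unit at a single time period, if g_ch + g_dc > 0 and λ_p ≥ −g_ch (the Relaxation conditions of group B in [14], Condition C3, adapted to ACOPF), then p_ch · p_dc = 0, i.e., no simultaneous charging and discharging occurs. -/
/-!
With `y = Γ * Δt` the marginal cost of stored energy, charging has reduced cost
`g_ch + λ_p + η_ch * y` and discharging `g_dc - λ_p - y / η_dc`. If `y > 0`, the former is positive
because `g_ch + λ_p ≥ 0`. If `y ≤ 0`, the two add up to `g_ch + g_dc - (1 / η_dc - η_ch) * y`, at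
least `g_ch + g_dc > 0`, so one of them is positive. A positive reduced cost must be balanced by a
positive multiplier of the constraint `0 ≤ p`, and complementary slackness then makes that power
vanish.
-/

theorem add_mul_pos_or_sub_mul_pos {R : Type*} [Ring R] [LinearOrder R] [IsStrictOrderedRing R]
    {a b c d : R} (ha : 0 < a) (hab : a ≤ b) (hc : 0 ≤ c) (hcd : 0 < c + d) (y : R) :
    0 < c + a * y ∨ 0 < d - b * y := by
  rcases lt_or_ge 0 y with hy | hy
  · exact Or.inl (add_pos_of_nonneg_of_pos hc (mul_pos ha hy))
  · have hmul : b * y ≤ a * y := mul_le_mul_of_nonpos_right hab hy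
    have hsum : 0 < (c + a * y) + (d - b * y) := calc
      0 < c + d := hcd
      _ ≤ (c + d) + (a * y - b * y) := le_add_of_nonneg_right (sub_nonneg.2 hmul)
      _ = (c + a * y) + (d - b * y) := by abel
    by_contra! hnonpos
    exact hsum.not_ge (add_nonpos hnonpos.1 hnonpos.2)

theorem eq_zero_of_reducedCost_pos {R : Type*} [Ring R] [PartialOrder R] [IsOrderedAddMonoid R]
    [NoZeroDivisors R] {reducedCost lam s p : R} (hcost : 0 < reducedCost) (hs : 0 ≤ s)
    (hslack : lam * p = 0) (hstat : reducedCost - lam + s = 0) : p = 0 := by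
  have hlam : reducedCost + s = lam := by
    rwa [sub_add_eq_add_sub, sub_eq_zero] at hstat
  have hlam_pos : 0 < lam := hlam ▸ add_pos_of_pos_of_nonneg hcost hs
  exact (mul_eq_zero.1 hslack).resolve_left hlam_pos.ne'

/-- `s_ch` and `s_dc` collect the stationarity terms of all constraints that bound the respective
power from above. -/
theorem condition_C3_groupB_exact_relaxation_general
    {K : Type*} [Field K] [LinearOrder K] [IsStrictOrderedRing K]
    {η_ch η_dc g_ch g_dc p_ch p_dc y lam_p lam_ch lam_dc s_ch s_dc : K}
    (hη_ch : 0 < η_ch) (hη_dc : 0 < η_dc) (hη : η_ch * η_dc ≤ 1)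
    (hs_ch : 0 ≤ s_ch) (hs_dc : 0 ≤ s_dc)
    (hslack_ch : lam_ch * p_ch = 0) (hslack_dc : lam_dc * p_dc = 0)
    (hstat_ch : g_ch + lam_p - lam_ch + s_ch + η_ch * y = 0)
    (hstat_dc : g_dc - lam_p - lam_dc + s_dc - y / η_dc = 0)
    (hg : 0 < g_ch + g_dc) (hlam_p : -g_ch ≤ lam_p) :
    p_ch * p_dc = 0 := by
  have hη_le : η_ch ≤ 1 / η_dc := (le_div_iff₀ hη_dc).2 hη
  have hcharge : 0 ≤ g_ch + lam_p := neg_le_iff_add_nonneg'.1 hlam_p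
  have htotal : 0 < (g_ch + lam_p) + (g_dc - lam_p) := by linarith
  rcases add_mul_pos_or_sub_mul_pos hη_ch hη_le hcharge htotal y with hcost | hcost
  · exact mul_eq_zero_of_left
      (eq_zero_of_reducedCost_pos hcost hs_ch hslack_ch (by linear_combination hstat_ch)) _
  · exact mul_eq_zero_of_right _
      (eq_zero_of_reducedCost_pos hcost hs_dc hslack_dc (by linear_combination hstat_dc))

theorem condition_C3_groupB_exact_relaxation
    (η_ch η_dc g_ch g_dc Δt Pch Pdc p_ch p_dc Γ lam_p lam_ch1 lam_ch2 lam_dc1 lam_dc2 lam_S1 lam_S2 lam_relax : ℝ)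
    (hηch0 : 0 < η_ch) (hηch1 : η_ch < 1) (hηdc0 : 0 < η_dc) (hηdc1 : η_dc < 1)
    (hΔt : 0 < Δt) (hPch : 0 < Pch) (hPdc : 0 < Pdc)
    (hpch : 0 ≤ p_ch) (hpdc : 0 ≤ p_dc)
    (hch1 : 0 ≤ lam_ch1) (hch2 : 0 ≤ lam_ch2) (hdc1 : 0 ≤ lam_dc1) (hdc2 : 0 ≤ lam_dc2)
    (hS1 : 0 ≤ lam_S1) (hS2 : 0 ≤ lam_S2) (hrelax : 0 ≤ lam_relax)
    (hcs1 : lam_ch1 * p_ch = 0) (hcs2 : lam_dc1 * p_dc = 0)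
    (hstat1 : g_ch + lam_p - lam_ch1 + lam_ch2 + lam_relax / Pch + 2 * lam_S2 * p_ch + η_ch * Γ * Δt = 0)
    (hstat2 : g_dc - lam_p - lam_dc1 + lam_dc2 + lam_relax / Pdc + 2 * lam_S1 * p_dc - Γ * Δt / η_dc = 0)
    (hC3_1 : g_ch + g_dc > 0) (hC3_2 : lam_p ≥ -g_ch) :
    p_ch * p_dc = 0 :=
  condition_C3_groupB_exact_relaxation_general (y := Γ * Δt)
    (s_ch := lam_ch2 + lam_relax / Pch + 2 * lam_S2 * p_ch)
    (s_dc := lam_dc2 + lam_relax / Pdc + 2 * lam_S1 * p_dc)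
    hηch0 hηdc0 (mul_le_one₀ hηch1.le hηdc0.le hηdc1.le) (by positivity) (by positivity) hcs1 hcs2
    (by linear_combination hstat1) (by linear_combination hstat2) hC3_1 hC3_2
end

section
/- Under the KKT setup for a single storage unit at a single time period, if g_ch + g_dc ≥ 0 and λ_p > −g_ch (the Relaxation conditions in [13], i.e., group A in [14], Condition C4, adapted to ACOPF), then p_ch · p_dc = 0, i.e., no simultaneous charging and discharging occurs. -/
/-!
Suppose both powers are positive. Complementary slackness then kills the multipliers of the lower
bounds `0 ≤ p_ch` and `0 ≤ p_dc`, and all the other multipliers only raise the marginal costs, which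
are therefore at least `g_ch + λ_p > 0` and `g_dc - λ_p`. Charging at a positive marginal cost is
stationary only if the value `v = Γ Δt` of stored energy is negative. As the round-trip efficiency
`η_ch η_dc` is below one, `v / η_dc < η_ch v` for such `v`, so adding the two stationarity equations
makes the sum of the marginal costs negative, whereas it is at least `g_ch + g_dc ≥ 0`.
-/

section

variable {K : Type*} [Field K]

/-- Marginal cost of a charging or discharging power `p` with capacity `P`: the derivative of the
Lagrangian in `p` without its stored-energy term. Here `g` is the gradient of the objective together
with the power-balance multiplier, `lam_lower` and `lam_upper` belong to the bounds `0 ≤ p` and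
`p ≤ P`, `lam_relax` to the relaxed complementarity constraint (linear in `p / P`), and `lam_S` to a
constraint quadratic in `p`. -/
def marginalCost (g lam_lower lam_upper lam_relax P lam_S p : K) : K :=
  g - lam_lower + lam_upper + lam_relax / P + 2 * lam_S * p

variable [LinearOrder K] [IsStrictOrderedRing K]

lemma le_marginalCost_of_pos {g lam_lower lam_upper lam_relax P lam_S p : K}
    (h_upper : 0 ≤ lam_upper) (h_relax : 0 ≤ lam_relax) (hP : 0 < P) (hS : 0 ≤ lam_S)
    (hp : 0 < p) (hslack : lam_lower * p = 0) :
    g ≤ marginalCost g lam_lower lam_upper lam_relax P lam_S p := by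
  have h_lower : lam_lower = 0 := (mul_eq_zero.mp hslack).resolve_right hp.ne'
  have h_terms : 0 ≤ lam_upper + lam_relax / P + 2 * lam_S * p := by positivity
  rw [marginalCost, h_lower]
  linarith

lemma div_lt_mul_of_neg_of_mul_lt_one {a b v : K} (hb : 0 < b) (hab : a * b < 1) (hv : v < 0) :
    v / b < a * v := by
  rw [div_lt_iff₀ hb]
  calc
    v = 1 * v := (one_mul v).symm
    _ < a * b * v := mul_lt_mul_of_neg_right hab hv
    _ = a * v * b := mul_right_comm a b v

lemma add_neg_of_stationary {η_ch η_dc c_ch c_dc v : K} (hη_ch : 0 ≤ η_ch) (hη_dc : 0 < η_dc)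
    (hη : η_ch * η_dc < 1) (hc_ch : 0 < c_ch)
    (hstat_ch : c_ch + η_ch * v = 0) (hstat_dc : c_dc - v / η_dc = 0) :
    c_ch + c_dc < 0 := by
  have hv : v < 0 := neg_of_mul_neg_right (by linarith) hη_ch
  have h_loss : v / η_dc < η_ch * v := div_lt_mul_of_neg_of_mul_lt_one hη_dc hη hv
  linarith

theorem condition_C4_groupA_exact_relaxation_general
    {η_ch η_dc g_ch g_dc Pch Pdc p_ch p_dc v lam_p : K}
    {lam_ch1 lam_ch2 lam_dc1 lam_dc2 lam_S1 lam_S2 lam_relax : K}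
    (hη_ch : 0 ≤ η_ch) (hη_dc : 0 < η_dc) (hη : η_ch * η_dc < 1)
    (hPch : 0 < Pch) (hPdc : 0 < Pdc) (hpch : 0 ≤ p_ch) (hpdc : 0 ≤ p_dc)
    (hch2 : 0 ≤ lam_ch2) (hdc2 : 0 ≤ lam_dc2)
    (hS1 : 0 ≤ lam_S1) (hS2 : 0 ≤ lam_S2) (hrelax : 0 ≤ lam_relax)
    (hslack_ch : lam_ch1 * p_ch = 0) (hslack_dc : lam_dc1 * p_dc = 0)
    (hstat_ch : marginalCost (g_ch + lam_p) lam_ch1 lam_ch2 lam_relax Pch lam_S2 p_ch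
      + η_ch * v = 0)
    (hstat_dc : marginalCost (g_dc - lam_p) lam_dc1 lam_dc2 lam_relax Pdc lam_S1 p_dc
      - v / η_dc = 0)
    (hg : 0 ≤ g_ch + g_dc) (hlam_p : -g_ch < lam_p) :
    p_ch * p_dc = 0 := by
  by_contra hne
  have hpch_pos : 0 < p_ch := hpch.lt_of_ne' (left_ne_zero_of_mul hne)
  have hpdc_pos : 0 < p_dc := hpdc.lt_of_ne' (right_ne_zero_of_mul hne)
  have hcost_ch : g_ch + lam_p ≤ marginalCost _ lam_ch1 lam_ch2 lam_relax Pch lam_S2 p_ch :=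
    le_marginalCost_of_pos hch2 hrelax hPch hS2 hpch_pos hslack_ch
  have hcost_dc : g_dc - lam_p ≤ marginalCost _ lam_dc1 lam_dc2 lam_relax Pdc lam_S1 p_dc :=
    le_marginalCost_of_pos hdc2 hrelax hPdc hS1 hpdc_pos hslack_dc
  have hcost_neg := add_neg_of_stationary hη_ch hη_dc hη (by linarith) hstat_ch hstat_dc
  linarith

end

theorem condition_C4_groupA_exact_relaxation
    (η_ch η_dc g_ch g_dc Δt Pch Pdc p_ch p_dc Γ lam_p lam_ch1 lam_ch2 lam_dc1 lam_dc2 lam_S1 lam_S2 lam_relax : ℝ)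
    (hηch0 : 0 < η_ch) (hηch1 : η_ch < 1) (hηdc0 : 0 < η_dc) (hηdc1 : η_dc < 1)
    (hΔt : 0 < Δt) (hPch : 0 < Pch) (hPdc : 0 < Pdc)
    (hpch : 0 ≤ p_ch) (hpdc : 0 ≤ p_dc)
    (hch1 : 0 ≤ lam_ch1) (hch2 : 0 ≤ lam_ch2) (hdc1 : 0 ≤ lam_dc1) (hdc2 : 0 ≤ lam_dc2)
    (hS1 : 0 ≤ lam_S1) (hS2 : 0 ≤ lam_S2) (hrelax : 0 ≤ lam_relax)
    (hcs1 : lam_ch1 * p_ch = 0) (hcs2 : lam_dc1 * p_dc = 0)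
    (hstat1 : g_ch + lam_p - lam_ch1 + lam_ch2 + lam_relax / Pch + 2 * lam_S2 * p_ch + η_ch * Γ * Δt = 0)
    (hstat2 : g_dc - lam_p - lam_dc1 + lam_dc2 + lam_relax / Pdc + 2 * lam_S1 * p_dc - Γ * Δt / η_dc = 0)
    (hC4_1 : g_ch + g_dc ≥ 0) (hC4_2 : lam_p > -g_ch) :
    p_ch * p_dc = 0 :=
  condition_C4_groupA_exact_relaxation_general hηch0.le hηdc0
    (mul_lt_one_of_nonneg_of_lt_one_left hηch0.le hηch1 hηdc1.le) hPch hPdc hpch hpdc hch2 hdc2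
    hS1 hS2 hrelax hcs1 hcs2 (mul_assoc η_ch Γ Δt ▸ hstat1) hstat2 hC4_1 hC4_2
end

section
/- Under the KKT setup for a single storage unit at a single time period, if g_ch/η_dc + g_dc·η_ch > 0 and λ_p ≥ 0 (the Relaxation conditions of group C in [14], Condition C5, adapted to ACOPF), then p_ch · p_dc = 0, i.e., no simultaneous charging and discharging occurs. -/
/-!
Charging at rate `1 / η_dc` while discharging at rate `η_ch` leaves the stored energy unchanged, so
the storage multiplier `Γ` drops out of the stationarity equations taken with these weights. If both
powers were nonzero, complementary slackness would make the multipliers of their lower bounds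
vanish, and the marginal cost of this round trip, plus the nonnegative weighted contributions of the
other constraints, would have to be zero. But condition C5 makes the objective part of that cost
positive, and the price `λ_p ≥ 0` adds the value `λ_p * (1 / η_dc - η_ch) ≥ 0` of the energy lost.
-/

section Field

variable {K : Type*} [Field K] {η_ch η_dc : K}

/-- The marginal cost of a round trip through the storage, charging at rate `1 / η_dc` and
discharging at rate `η_ch`, when the marginal costs of charging and discharging are `c_ch` and
`c_dc`. The rates are chosen so that the energy charged, `η_ch * (1 / η_dc)`, equals the energy
discharged, `η_ch / η_dc`. -/
def roundTripCost (η_ch η_dc c_ch c_dc : K) : K :=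
  c_ch / η_dc + c_dc * η_ch

theorem roundTripCost_add (a_ch a_dc b_ch b_dc : K) :
    roundTripCost η_ch η_dc (a_ch + b_ch) (a_dc + b_dc) =
      roundTripCost η_ch η_dc a_ch a_dc + roundTripCost η_ch η_dc b_ch b_dc := by
  unfold roundTripCost
  ring

theorem roundTripCost_stored_energy (γ : K) :
    roundTripCost η_ch η_dc (η_ch * γ) (-(γ / η_dc)) = 0 := by
  unfold roundTripCost
  ring

theorem roundTripCost_eq_of_stationary {c_ch c_dc μ_ch μ_dc γ : K}
    (h_ch : c_ch + η_ch * γ = μ_ch) (h_dc : c_dc - γ / η_dc = μ_dc) :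
    roundTripCost η_ch η_dc c_ch c_dc = roundTripCost η_ch η_dc μ_ch μ_dc := by
  rw [← h_ch, ← h_dc, sub_eq_add_neg, roundTripCost_add, roundTripCost_stored_energy, add_zero]

theorem mul_eq_zero_of_roundTripCost_ne_zero {μ_ch μ_dc p_ch p_dc : K}
    (hμ : roundTripCost η_ch η_dc μ_ch μ_dc ≠ 0)
    (h_ch : μ_ch * p_ch = 0) (h_dc : μ_dc * p_dc = 0) : p_ch * p_dc = 0 := by
  by_contra hp
  have hμ_ch : μ_ch = 0 := (mul_eq_zero.mp h_ch).resolve_right (left_ne_zero_of_mul hp)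
  have hμ_dc : μ_dc = 0 := (mul_eq_zero.mp h_dc).resolve_right (right_ne_zero_of_mul hp)
  exact hμ (by simp [roundTripCost, hμ_ch, hμ_dc])

end Field

section OrderedField

variable {K : Type*} [Field K] [LinearOrder K] [IsStrictOrderedRing K] {η_ch η_dc : K}

theorem roundTripCost_mono (hη_ch : 0 ≤ η_ch) (hη_dc : 0 ≤ η_dc) {a_ch a_dc b_ch b_dc : K}
    (h_ch : a_ch ≤ b_ch) (h_dc : a_dc ≤ b_dc) :
    roundTripCost η_ch η_dc a_ch a_dc ≤ roundTripCost η_ch η_dc b_ch b_dc := by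
  unfold roundTripCost
  gcongr

theorem roundTripCost_price_nonneg (hη_dc : 0 < η_dc) (hη : η_ch * η_dc ≤ 1) {price : K}
    (h_price : 0 ≤ price) : 0 ≤ roundTripCost η_ch η_dc price (-price) := by
  have h_loss : 0 ≤ 1 / η_dc - η_ch := sub_nonneg.mpr ((le_div_iff₀ hη_dc).mpr hη)
  calc
    0 ≤ price * (1 / η_dc - η_ch) := mul_nonneg h_price h_loss
    _ = roundTripCost η_ch η_dc price (-price) := by unfold roundTripCost; ring

theorem roundTripCost_le_add_price (hη_dc : 0 < η_dc) (hη : η_ch * η_dc ≤ 1) {price : K}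
    (h_price : 0 ≤ price) (c_ch c_dc : K) :
    roundTripCost η_ch η_dc c_ch c_dc ≤
      roundTripCost η_ch η_dc (c_ch + price) (c_dc - price) := by
  rw [sub_eq_add_neg, roundTripCost_add]
  exact le_add_of_nonneg_right (roundTripCost_price_nonneg hη_dc hη h_price)

theorem condition_C5_groupC_exact_relaxation_general
    {g_ch g_dc Δt Pch Pdc p_ch p_dc Γ lam_p lam_ch1 lam_ch2 lam_dc1 lam_dc2 lam_S1 lam_S2
      lam_relax : K}
    (hηch : 0 ≤ η_ch) (hηdc : 0 < η_dc) (hPch : 0 < Pch) (hPdc : 0 < Pdc)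
    (hpch : 0 ≤ p_ch) (hpdc : 0 ≤ p_dc) (hch2 : 0 ≤ lam_ch2) (hdc2 : 0 ≤ lam_dc2)
    (hS1 : 0 ≤ lam_S1) (hS2 : 0 ≤ lam_S2) (hrelax : 0 ≤ lam_relax)
    (hcs1 : lam_ch1 * p_ch = 0) (hcs2 : lam_dc1 * p_dc = 0)
    (hstat1 : g_ch + lam_p - lam_ch1 + lam_ch2 + lam_relax / Pch + 2 * lam_S2 * p_ch
      + η_ch * Γ * Δt = 0)
    (hstat2 : g_dc - lam_p - lam_dc1 + lam_dc2 + lam_relax / Pdc + 2 * lam_S1 * p_dc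
      - Γ * Δt / η_dc = 0)
    (hcost : 0 < roundTripCost η_ch η_dc (g_ch + lam_p) (g_dc - lam_p)) :
    p_ch * p_dc = 0 := by
  have h_bounds_ch : 0 ≤ lam_ch2 + lam_relax / Pch + 2 * lam_S2 * p_ch := by positivity
  have h_bounds_dc : 0 ≤ lam_dc2 + lam_relax / Pdc + 2 * lam_S1 * p_dc := by positivity
  have h_multipliers : 0 < roundTripCost η_ch η_dc lam_ch1 lam_dc1 := calc
    0 < roundTripCost η_ch η_dc (g_ch + lam_p) (g_dc - lam_p) := hcost
    _ ≤ roundTripCost η_ch η_dc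
          (g_ch + lam_p + (lam_ch2 + lam_relax / Pch + 2 * lam_S2 * p_ch))
          (g_dc - lam_p + (lam_dc2 + lam_relax / Pdc + 2 * lam_S1 * p_dc)) :=
      roundTripCost_mono hηch hηdc.le
        (le_add_of_nonneg_right h_bounds_ch) (le_add_of_nonneg_right h_bounds_dc)
    _ = roundTripCost η_ch η_dc lam_ch1 lam_dc1 :=
      roundTripCost_eq_of_stationary (γ := Γ * Δt)
        (by linear_combination hstat1) (by linear_combination hstat2)
  exact mul_eq_zero_of_roundTripCost_ne_zero h_multipliers.ne' hcs1 hcs2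

end OrderedField

theorem condition_C5_groupC_exact_relaxation
    (η_ch η_dc g_ch g_dc Δt Pch Pdc p_ch p_dc Γ lam_p lam_ch1 lam_ch2 lam_dc1 lam_dc2 lam_S1 lam_S2 lam_relax : ℝ)
    (hηch0 : 0 < η_ch) (hηch1 : η_ch < 1) (hηdc0 : 0 < η_dc) (hηdc1 : η_dc < 1)
    (hΔt : 0 < Δt) (hPch : 0 < Pch) (hPdc : 0 < Pdc)
    (hpch : 0 ≤ p_ch) (hpdc : 0 ≤ p_dc)
    (hch1 : 0 ≤ lam_ch1) (hch2 : 0 ≤ lam_ch2) (hdc1 : 0 ≤ lam_dc1) (hdc2 : 0 ≤ lam_dc2)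
    (hS1 : 0 ≤ lam_S1) (hS2 : 0 ≤ lam_S2) (hrelax : 0 ≤ lam_relax)
    (hcs1 : lam_ch1 * p_ch = 0) (hcs2 : lam_dc1 * p_dc = 0)
    (hstat1 : g_ch + lam_p - lam_ch1 + lam_ch2 + lam_relax / Pch + 2 * lam_S2 * p_ch + η_ch * Γ * Δt = 0)
    (hstat2 : g_dc - lam_p - lam_dc1 + lam_dc2 + lam_relax / Pdc + 2 * lam_S1 * p_dc - Γ * Δt / η_dc = 0)
    (hC5_1 : g_ch / η_dc + g_dc * η_ch > 0) (hC5_2 : lam_p ≥ 0) :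
    p_ch * p_dc = 0 :=
  condition_C5_groupC_exact_relaxation_general hηch0.le hηdc0 hPch hPdc hpch hpdc hch2 hdc2 hS1 hS2
    hrelax hcs1 hcs2 hstat1 hstat2 <| hC5_1.trans_le <|
      roundTripCost_le_add_price hηdc0 (mul_le_one₀ hηch1.le hηdc0.le hηdc1.le) hC5_2 g_ch g_dc
end

section
/- If g_ch + g_dc > 0, then −g_ch > λ^{p,C2}; consequently the region of locational marginal prices formed by Condition C2 (λ_p > λ^{p,C2}) contains the region formed by the Relaxation conditions of group B in [14] (λ_p ≥ −g_ch) (Lemma 4, key inequality (68)). -/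
theorem neg_sub_mul_add_mul_div_sub {K : Type*} [Field K] {x y : K} (hxy : x ≠ y) (a b : K) :
    -a - (a * y + b * x) / (x - y) = x * (a + b) / (y - x) := by
  have hsub : x - y ≠ 0 := sub_ne_zero.mpr hxy
  rw [← neg_sub x y]
  field_simp
  ring

theorem lemma4_key_inequality_general {K : Type*} [Field K] [LinearOrder K] [IsStrictOrderedRing K]
    {η_ch η_dc : K} (hηch : 0 < η_ch) (hηdc : 0 < η_dc) (hη : η_ch * η_dc < 1) (g_ch g_dc : K) :
    -g_ch > (g_ch / η_dc + g_dc * η_ch) / (η_ch - 1 / η_dc) ↔ g_ch + g_dc > 0 := by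
  have hlt : η_ch < 1 / η_dc := (lt_div_iff₀ hηdc).mpr hη
  calc -g_ch > (g_ch / η_dc + g_dc * η_ch) / (η_ch - 1 / η_dc)
    _ ↔ 0 < -g_ch - (g_ch * (1 / η_dc) + g_dc * η_ch) / (η_ch - 1 / η_dc) := by
      rw [gt_iff_lt, ← sub_pos, div_eq_mul_one_div g_ch]
    _ ↔ 0 < η_ch * (g_ch + g_dc) / (1 / η_dc - η_ch) := by
      rw [neg_sub_mul_add_mul_div_sub hlt.ne]
    _ ↔ g_ch + g_dc > 0 := by
      rw [div_pos_iff_of_pos_right (sub_pos.mpr hlt), mul_pos_iff_of_pos_left hηch]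

theorem lemma4_key_inequality
    (η_ch η_dc g_ch g_dc : ℝ)
    (hηch0 : 0 < η_ch) (hηch1 : η_ch < 1) (hηdc0 : 0 < η_dc) (hηdc1 : η_dc < 1)
    (h : g_ch + g_dc > 0) :
    -g_ch > (g_ch / η_dc + g_dc * η_ch) / (η_ch - 1 / η_dc) := by
  have hη : η_ch * η_dc < 1 := mul_lt_one_of_nonneg_of_lt_one_left hηch0.le hηch1 hηdc1.le
  exact (lemma4_key_inequality_general hηch0 hηdc0 hη g_ch g_dc).mpr h
end
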